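/- The rank of the degree-n graded piece Lie_r^n of the free Lie ring on r generators equals (1/n)·Σ_{d | n} μ(d)·r^{n/d}, where μ is the Möbius function (Witt's formula). -/

import Mathlib

/-- The span of brackets `⁅a, b⁆` with `a ∈ A`, `b ∈ B`, for submodules of a Lie ring. -/
def bracketSpan {L : Type*} [LieRing L] [LieAlgebra ℤ L] (A B : Submodule ℤ L) :
    Submodule ℤ L :=
  Submodule.span ℤ {x | ∃ a ∈ A, ∃ b ∈ B, x = ⁅a, b⁆}

/-- The span of the generators of the free Lie ring on `r` generators. -/
noncomputable def freeLieDegreeOne (r : ℕ) : Submodule ℤ (FreeLieAlgebra ℤ (Fin r)) :=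
  Submodule.span ℤ (Set.range (FreeLieAlgebra.of ℤ))

/-- The degree-`n` graded piece `Lie_r^n` of the free Lie ring on `r` generators: the
span of the `n`-fold brackets of the generators. -/
noncomputable def freeLiePiece (r : ℕ) : ℕ → Submodule ℤ (FreeLieAlgebra ℤ (Fin r))
  | 0 => ⊥
  | 1 => freeLieDegreeOne r
  | n + 2 => bracketSpan (freeLieDegreeOne r) (freeLiePiece r (n + 1))


namespace WittAux
open List

variable {α : Type*} [LinearOrder α]

theorem app_lt_left (s : List α) {a b : List α} : s ++ a < s ++ b ↔ a < b := by
  induction s with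
  | nil => simp
  | cons x s ih => simp [ih]

theorem lt_app (p : List α) {s : List α} (hs : s ≠ []) : p < p ++ s := by
  have h : p ++ [] < p ++ s := by
    rw [app_lt_left]
    cases s with
    | nil => exact absurd rfl hs
    | cons a s => exact List.nil_lt_cons a s
  simpa using h

theorem le_app (p s : List α) : p ≤ p ++ s := by
  by_cases hs : s = []
  · simp [hs]
  · exact (lt_app p hs).le

theorem app_lt_app {u v : List α} (h : u < v) (hp : ¬ u <+: v) (x y : List α) :
    u ++ x < v ++ y := by
  induction u generalizing v with
  | nil => exact absurd (List.nil_prefix) hp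
  | cons a u ih =>
    cases v with
    | nil => exact absurd h (List.not_lt_nil _)
    | cons b v =>
      rw [List.cons_lt_cons_iff] at h
      simp only [List.cons_append, List.cons_lt_cons_iff]
      rcases h with h | ⟨rfl, h⟩
      · exact Or.inl h
      · exact Or.inr ⟨rfl, ih h (fun hh => hp (by simpa using hh))⟩

theorem app_lt_app_len {u v : List α} (h : u < v) (hl : v.length ≤ u.length) (x y : List α) :
    u ++ x < v ++ y := by
  refine app_lt_app h (fun hp => ?_) x y
  exact h.ne (hp.eq_of_length_le hl)

/-- Lyndon words. -/
def Lyn (w : List α) : Prop :=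
  w ≠ [] ∧ ∀ p s, p ≠ [] → s ≠ [] → w = p ++ s → w < s

/-- Standard factorization: `v` is the least proper nonempty suffix of `u ++ v`. -/
def Std (u v : List α) : Prop :=
  u ≠ [] ∧ v ≠ [] ∧ ∀ p s, p ≠ [] → s ≠ [] → u ++ v = p ++ s → v ≤ s

theorem Std.unique {u v u' v' : List α} (h : Std u v) (h' : Std u' v') (e : u ++ v = u' ++ v') :
    u = u' ∧ v = v' := by
  have : v = v' := le_antisymm (h.2.2 _ _ h'.1 h'.2.1 e) (h'.2.2 _ _ h.1 h.2.1 e.symm)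
  subst this
  exact ⟨List.append_cancel_right e, rfl⟩

theorem exists_std (w : List α) (hw : 2 ≤ w.length) : ∃ u v, w = u ++ v ∧ Std u v := by
  have hne : (Finset.Ico 1 w.length).Nonempty := ⟨1, by simp; omega⟩
  obtain ⟨k, hk, hmin⟩ := Finset.exists_min_image (Finset.Ico 1 w.length) (fun k => w.drop k) hne
  rw [Finset.mem_Ico] at hk
  refine ⟨w.take k, w.drop k, (List.take_append_drop k w).symm, ?_, ?_, ?_⟩
  · intro h
    have := congrArg List.length h
    rw [List.length_take, List.length_nil] at this; omega
  · intro h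
    have := congrArg List.length h
    rw [List.length_drop, List.length_nil] at this; omega
  · intro p s hp hs e
    rw [List.take_append_drop] at e
    have h1 := List.length_pos_of_ne_nil hp
    have h2 := List.length_pos_of_ne_nil hs
    have := hmin p.length (by rw [Finset.mem_Ico, e]; simp; omega)
    simpa [e] using this

theorem Std.lyn_right {u v : List α} (h : Std u v) : Lyn v := by
  refine ⟨h.2.1, fun p s hp hs e => ?_⟩
  refine lt_of_le_of_ne (h.2.2 (u ++ p) s (by simp [hp]) hs (by simp [e])) ?_
  rintro rfl
  exact hp (by simpa using e)

theorem Std.lyn_left {u v : List α} (h : Std u v) (hl : Lyn (u ++ v)) : Lyn u := by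
  refine ⟨h.1, fun p s hp hs e => ?_⟩
  have h1 : u ++ v < s ++ v := hl.2 p (s ++ v) hp (by simp [hs]) (by simp [e])
  by_contra hc
  have hlt : s < u := lt_of_le_of_ne (not_lt.1 hc) (by
    intro h'
    exact hp (by simpa [h'] using e))
  by_cases hpre : s <+: u
  · obtain ⟨t, rfl⟩ := hpre
    have ht : t ≠ [] := by
      rintro rfl
      simp at hlt
    rw [List.append_assoc, app_lt_left] at h1
    exact absurd (h.2.2 s (t ++ v) hs (by simp [ht]) (by simp)) (not_le.2 h1)
  · exact lt_asymm h1 (app_lt_app hlt hpre v v)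

theorem Std.lt {u v : List α} (h : Std u v) (hl : Lyn (u ++ v)) : u < v :=
  (lt_app u h.2.1).trans (hl.2 u v h.1 h.2.1 rfl)

theorem lyn_app_lt {u v : List α} (hu : Lyn u) (hv : Lyn v) (h : u < v) : u ++ v < v := by
  by_cases hpre : u <+: v
  · obtain ⟨t, rfl⟩ := hpre
    have ht : t ≠ [] := by
      rintro rfl
      simp at h
    rw [app_lt_left]
    exact hv.2 u t hu.1 ht rfl
  · simpa using app_lt_app h hpre v []

theorem lyn_append {u v : List α} (hu : Lyn u) (hv : Lyn v) (h : u < v) : Lyn (u ++ v) := by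
  refine ⟨by simp [hu.1], fun p s hp hs e => ?_⟩
  have huv := lyn_app_lt hu hv h
  rcases List.append_eq_append_iff.1 e with ⟨t, rfl, rfl⟩ | ⟨t, rfl, rfl⟩
  · by_cases ht : t = []
    · subst ht; simpa using huv
    · exact huv.trans (hv.2 t s ht hs rfl)
  · by_cases ht : t = []
    · subst ht; simpa using huv
    · exact app_lt_app_len (hu.2 p t hp ht rfl) (by simp) v v

theorem std_singleton {a : α} {v : List α} (hv : Lyn v) : Std [a] v := by
  refine ⟨by simp, hv.1, fun p s hp hs e => ?_⟩
  cases p with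
  | nil => exact absurd rfl hp
  | cons b p =>
    simp only [List.cons_append, List.nil_append, List.cons.injEq] at e
    by_cases hp' : p = []
    · simp [hp', e.2]
    · exact (hv.2 p s hp' hs e.2).le

theorem std_append {u₁ u₂ v : List α} (hu : Std u₁ u₂) (hv : Lyn v) (h : v ≤ u₂) :
    Std (u₁ ++ u₂) v := by
  refine ⟨by simp [hu.1], hv.1, fun p s hp hs e => ?_⟩
  rcases List.append_eq_append_iff.1 e with ⟨t, rfl, rfl⟩ | ⟨t, ht', rfl⟩
  · by_cases ht : t = []
    · subst ht; simp
    · exact (hv.2 t s ht hs rfl).le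
  · by_cases ht : t = []
    · subst ht; simp
    · exact (h.trans (hu.2.2 p t hp ht ht')).trans (le_app _ _)

theorem lyn_of_rot {w : List α} (h0 : w ≠ [])
    (h : ∀ p s, p ≠ [] → s ≠ [] → w = p ++ s → w < s ++ p) : Lyn w := by
  refine ⟨h0, fun p s hp hs e => ?_⟩
  by_contra hc
  have hne : s ≠ w := by
    rintro rfl
    exact hp (by simpa using e)
  have hlt := lt_of_le_of_ne (not_lt.1 hc) hne
  have h1 := h p s hp hs e
  by_cases hpre : s <+: w
  · obtain ⟨t, ht⟩ := hpre
    have ht0 : t ≠ [] := by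
      rintro rfl
      exact hne (by simpa using ht)
    have h2 := h s t hs ht0 ht.symm
    have hlen : t.length = p.length := by
      have := congrArg List.length (ht.trans e)
      simp at this; omega
    rw [← ht, app_lt_left] at h1
    have h3 := app_lt_app_len h1 hlen.ge s s
    rw [← e] at h3
    exact lt_asymm h2 h3
  · have := app_lt_app hlt hpre p []
    simp at this
    exact lt_asymm h1 this

theorem Lyn.rot {w : List α} (hw : Lyn w) {p s : List α} (hp : p ≠ []) (hs : s ≠ [])
    (e : w = p ++ s) : w < s ++ p := (hw.2 p s hp hs e).trans_le (le_app _ _)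

theorem lyn_singleton (a : α) : Lyn [a] := by
  refine ⟨by simp, fun p s hp hs e => ?_⟩
  have := congrArg List.length e
  have h1 := List.length_pos_of_ne_nil hp
  have h2 := List.length_pos_of_ne_nil hs
  simp at this; omega

section count
open Function

/-- The shift on sequences. -/
def sh (f : ℕ → α) : ℕ → α := fun i => f (i + 1)

theorem sh_iter (k : ℕ) (f : ℕ → α) (i : ℕ) : sh^[k] f i = f (i + k) := by
  induction k generalizing f with
  | zero => rfl
  | succ k ih => rw [iterate_succ_apply, ih]; simp [sh, add_assoc]

/-- The word of the first `n` letters. -/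
def word (n : ℕ) (f : ℕ → α) : List α := (List.range n).map f

theorem word_length (n : ℕ) (f : ℕ → α) : (word n f).length = n := by simp [word]

theorem word_shift {n : ℕ} {f : ℕ → α} (hf : IsPeriodicPt sh n f) {k : ℕ} (hk : k ≤ n) :
    word n (sh^[k] f) = (word n f).drop k ++ (word n f).take k := by
  have hper : ∀ i, f (i + n) = f i := fun i => by
      rw [← sh_iter n f i, hf]
  apply List.ext_getElem
  · simp [word]; omega
  · intro i h1 h2
    rw [word_length] at h1
    rw [List.getElem_append]
    split_ifs with h
    · simp [word, sh_iter, add_comm]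
    · simp [word, sh_iter]
      rw [List.length_drop, word_length] at h
      rw [← hper (i - (n - k))]; congr 1; omega

theorem word_inj {n : ℕ} (hn : 0 < n) {f g : ℕ → α} (hf : IsPeriodicPt sh n f)
    (hg : IsPeriodicPt sh n g) (h : word n f = word n g) : f = g := by
  have key : ∀ {f : ℕ → α}, IsPeriodicPt sh n f → ∀ i, f (i % n) = f i := by
    intro f hf i
    have hp : Function.Periodic f n := fun i => by
      rw [← sh_iter n f i, hf]
    exact hp.map_mod_nat i
  funext i
  rw [← key hf, ← key hg]
  have := List.map_inj_left.1 h (i % n) (by simpa using Nat.mod_lt i hn)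
  exact this

theorem word_surj {n : ℕ} (hn : 0 < n) (w : List α) (hw : w.length = n) :
    ∃ f, IsPeriodicPt sh n f ∧ word n f = w := by
  refine ⟨fun i => w[i % n]'(by rw [hw]; exact Nat.mod_lt i hn), ?_, ?_⟩
  · funext i
    rw [sh_iter]; simp
  · apply List.ext_getElem
    · simp [word, hw]
    · intro i h1 h2
      simp [word]
      simp [word] at h1
      simp [Nat.mod_eq_of_lt h1]

/-- periodic sequences with Lyndon period. -/
def LynSeq (n : ℕ) (f : ℕ → α) : Prop := IsPeriodicPt sh n f ∧ Lyn (word n f)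

theorem LynSeq.lt {n : ℕ} {f : ℕ → α} (h : LynSeq n f) {k : ℕ} (h0 : 0 < k) (hk : k < n) :
    word n f < word n (sh^[k] f) := by
  rw [word_shift h.1 hk.le]
  refine h.2.rot ?_ ?_ (List.take_append_drop k _).symm
  · intro h
    have := congrArg List.length h
    rw [List.length_take, List.length_nil, word_length] at this; omega
  · intro h
    have := congrArg List.length h
    rw [List.length_drop, List.length_nil, word_length] at this; omega

theorem isPeriodicPt_sh {n : ℕ} {f : ℕ → α} (h : IsPeriodicPt sh n f) (k : ℕ) :
    IsPeriodicPt sh n (sh^[k] f) := h.apply_iterate k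

theorem LynSeq.not_shift {n : ℕ} {f : ℕ → α} (h : LynSeq n f) {k : ℕ} (h0 : 0 < k) (hk : k < n) :
    ¬ LynSeq n (sh^[k] f) := by
  intro h'
  have h1 := h.lt h0 hk
  have h2 := h'.lt (k := n - k) (by omega) (by omega)
  rw [← iterate_add_apply, Nat.sub_add_cancel hk.le, h.1] at h2
  exact lt_asymm h1 h2

theorem LynSeq.minimalPeriod {n : ℕ} (hn : 0 < n) {f : ℕ → α} (h : LynSeq n f) :
    minimalPeriod sh f = n := by
  have h1 := h.1.minimalPeriod_le hn
  have h2 := h.1.minimalPeriod_pos hn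
  by_contra hne
  have h3 := h.lt h2 (by omega)
  rw [iterate_minimalPeriod] at h3
  exact lt_irrefl _ h3

theorem exists_lynSeq {n : ℕ} (hn : 0 < n) {f : ℕ → α} (h : minimalPeriod sh f = n) :
    ∃ k < n, LynSeq n (sh^[k] f) := by
  have hf : IsPeriodicPt sh n f := h ▸ isPeriodicPt_minimalPeriod sh f
  obtain ⟨k, hk, hmin⟩ := Finset.exists_min_image (Finset.range n) (fun k => word n (sh^[k] f))
    ⟨0, by simpa using hn⟩
  rw [Finset.mem_range] at hk
  refine ⟨k, hk, isPeriodicPt_sh hf k, lyn_of_rot ?_ ?_⟩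
  · intro h
    have := congrArg List.length h
    rw [word_length] at this; simp at this; omega
  · intro p s hp hs e
    have hl := congrArg List.length e
    have h1 := List.length_pos_of_ne_nil hp
    have h2 := List.length_pos_of_ne_nil hs
    rw [word_length, List.length_append] at hl
    have hrot : s ++ p = word n (sh^[p.length] (sh^[k] f)) := by
      rw [word_shift (isPeriodicPt_sh hf k) (by omega), e]; simp
    have hrot2 : sh^[p.length] (sh^[k] f) = sh^[(p.length + k) % n] f := by
      rw [← iterate_add_apply, hf.iterate_mod_apply]
    rw [hrot]
    refine lt_of_le_of_ne ?_ ?_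
    · rw [hrot2]
      exact hmin _ (by simpa using Nat.mod_lt _ hn)
    · intro heq
      have h3 := word_inj hn (isPeriodicPt_sh hf k) (isPeriodicPt_sh (isPeriodicPt_sh hf k) _) heq
      have h4 : IsPeriodicPt sh p.length (sh^[k] f) := h3.symm
      have h5 : IsPeriodicPt sh p.length f := by
        have := h4.apply_iterate (n - k)
        rwa [← iterate_add_apply, Nat.sub_add_cancel hk.le, hf] at this
      have := h5.minimalPeriod_le h1
      omega

theorem card_minimalPeriod {n : ℕ} (hn : 0 < n) :
    Nat.card {f : ℕ → α // minimalPeriod sh f = n} =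
      n * Nat.card {w : List α // Lyn w ∧ w.length = n} := by
  have e1 : Nat.card {w : List α // Lyn w ∧ w.length = n} = Nat.card {f : ℕ → α // LynSeq n f} := by
    symm
    refine Nat.card_eq_of_bijective
      (fun f => ⟨word n f.1, f.2.2, word_length n f.1⟩) ⟨?_, ?_⟩
    · intro f g h
      exact Subtype.ext (word_inj hn f.2.1 g.2.1 (congrArg Subtype.val h))
    · rintro ⟨w, hw, hl⟩
      obtain ⟨f, hf, rfl⟩ := word_surj hn w hl
      exact ⟨⟨f, hf, hw⟩, rfl⟩
  rw [e1]
  conv_rhs => rw [← Nat.card_fin n, ← Nat.card_prod]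
  simp only [Nat.card_fin]
  symm
  have key : ∀ (i j : Fin n) (f g : {f : ℕ → α // LynSeq n f}), i ≤ j →
      sh^[i.1] f.1 = sh^[j.1] g.1 → i = j ∧ f = g := by
    intro i j f g hij h
    have h1 := congrArg (sh^[n - i.1]) h
    rw [← iterate_add_apply, ← iterate_add_apply, Nat.sub_add_cancel i.2.le, f.2.1] at h1
    have h2 : n - i.1 + j.1 = (j.1 - i.1) + n := by have := i.2; have : i.1 ≤ j.1 := hij; omega
    rw [h2, iterate_add_apply, g.2.1] at h1
    have h3 : j.1 - i.1 = 0 := by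
      by_contra h4
      have := g.2.not_shift (k := j.1 - i.1) (by omega) (by have := j.2; omega)
      rw [← h1] at this
      exact this f.2
    rw [h3] at h1
    exact ⟨le_antisymm hij (Fin.le_def.2 (by omega)), Subtype.ext h1⟩
  refine Nat.card_eq_of_bijective (fun x : Fin n × {f : ℕ → α // LynSeq n f} =>
    (⟨sh^[x.1.1] x.2.1, ?_⟩ : {f : ℕ → α // minimalPeriod sh f = n})) ⟨?_, ?_⟩
  · rw [minimalPeriod_apply_iterate ⟨n, hn, x.2.2.1⟩, x.2.2.minimalPeriod hn]
  · rintro ⟨i, f⟩ ⟨j, g⟩ h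
    have h' := congrArg Subtype.val h
    rcases le_total i j with hij | hij
    · obtain ⟨rfl, rfl⟩ := key i j f g hij h'
      rfl
    · obtain ⟨rfl, rfl⟩ := key j i g f hij h'.symm
      rfl
  · rintro ⟨f, hf⟩
    obtain ⟨k, hk, hl⟩ := exists_lynSeq hn hf
    have hp : IsPeriodicPt sh n f := hf ▸ isPeriodicPt_minimalPeriod sh f
    refine ⟨⟨⟨(n - k) % n, Nat.mod_lt _ hn⟩, ⟨_, hl⟩⟩, Subtype.ext ?_⟩
    change sh^[(n - k) % n] (sh^[k] f) = f
    rw [(isPeriodicPt_sh hp k).iterate_mod_apply, ← iterate_add_apply, Nat.sub_add_cancel hk.le, hp]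

theorem card_periodic [Fintype α] {n : ℕ} (hn : 0 < n) :
    Nat.card {f : ℕ → α // IsPeriodicPt sh n f} = Fintype.card α ^ n := by
  rw [← card_vector, ← Nat.card_eq_fintype_card]
  refine Nat.card_eq_of_bijective
      (fun f => (⟨word n f.1, word_length n f.1⟩ : List.Vector α n)) ⟨?_, ?_⟩
  · intro f g h
    exact Subtype.ext (word_inj hn f.2 g.2 (congrArg Subtype.val h))
  · rintro ⟨w, hl⟩
    obtain ⟨f, hf, rfl⟩ := word_surj hn w hl
    exact ⟨⟨f, hf⟩, rfl⟩

theorem finite_lyn [Finite α] (n : ℕ) : Finite {w : List α // Lyn w ∧ w.length = n} :=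
  ((List.finite_length_eq α n).subset (fun _ h => h.2) : Set.Finite {w : List α | Lyn w ∧ w.length = n})

theorem sum_lyn [Fintype α] {n : ℕ} (hn : 0 < n) :
    ∑ d ∈ n.divisors, d * Nat.card {w : List α // Lyn w ∧ w.length = d} = Fintype.card α ^ n := by
  rw [← card_periodic hn]
  have hdvd : ∀ x : (Σ d : n.divisors, {f : ℕ → α // minimalPeriod sh f = d.1}),
      IsPeriodicPt sh n x.2.1 := fun x => by
    rw [isPeriodicPt_iff_minimalPeriod_dvd, x.2.2]
    exact Nat.dvd_of_mem_divisors x.1.2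
  have hinj : Function.Injective (fun x : (Σ d : n.divisors, {f : ℕ → α // minimalPeriod sh f = d.1}) =>
      (⟨x.2.1, hdvd x⟩ : {f : ℕ → α // IsPeriodicPt sh n f})) := by
    rintro ⟨⟨d, hd⟩, ⟨f, hf⟩⟩ ⟨⟨d', hd'⟩, ⟨g, hg⟩⟩ h
    have h' : f = g := congrArg Subtype.val h
    subst h'
    have : d = d' := hf.symm.trans hg
    subst this
    rfl
  have hfin2 : ∀ d : n.divisors, Finite {f : ℕ → α // minimalPeriod sh f = d.1} := by
    intro d
    have hper : ∀ f : {f : ℕ → α // minimalPeriod sh f = d.1}, IsPeriodicPt sh n f.1 :=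
      fun f => hdvd ⟨d, f⟩
    exact Finite.of_injective (β := List.Vector α n)
      (fun f => (⟨word n f.1, word_length n f.1⟩ : List.Vector α n))
      (fun f g h => Subtype.ext (word_inj hn (hper f) (hper g) (congrArg Subtype.val h)))
  have : Nat.card {f : ℕ → α // IsPeriodicPt sh n f} =
      Nat.card (Σ d : n.divisors, {f : ℕ → α // minimalPeriod sh f = d.1}) := by
    symm
    refine Nat.card_eq_of_bijective _ ⟨hinj, ?_⟩
    rintro ⟨f, hf⟩
    exact ⟨⟨⟨minimalPeriod sh f, Nat.mem_divisors.2 ⟨hf.minimalPeriod_dvd, hn.ne'⟩⟩, ⟨f, rfl⟩⟩, rfl⟩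
  rw [this, Nat.card_sigma, ← Finset.sum_coe_sort]
  refine Finset.sum_congr rfl fun d _ => ?_
  rw [card_minimalPeriod (Nat.pos_of_mem_divisors d.2)]

theorem lyn_formula [Fintype α] {n : ℕ} (hn : 0 < n) :
    (n : ℤ) * (Nat.card {w : List α // Lyn w ∧ w.length = n} : ℤ) =
      ∑ d ∈ n.divisors, (ArithmeticFunction.moebius d : ℤ) * (Fintype.card α : ℤ) ^ (n / d) := by
  have := (ArithmeticFunction.sum_eq_iff_sum_mul_moebius_eq (R := ℤ)
    (f := fun n => (n : ℤ) * (Nat.card {w : List α // Lyn w ∧ w.length = n} : ℤ))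
    (g := fun n => (Fintype.card α : ℤ) ^ n)).1 (fun n hn => by
      have := sum_lyn (α := α) hn
      exact_mod_cast this) n hn
  simp only [Int.cast_id] at this
  rw [← this, Nat.sum_divisorsAntidiagonal
    (fun i j => ((ArithmeticFunction.moebius i : ℤ) : ℤ) * (Fintype.card α : ℤ) ^ j)]

end count


section lie
open Submodule

theorem std_len {u v : List α} (h : Std u v) :
    u.length < (u ++ v).length ∧ v.length < (u ++ v).length := by
  have h1 := List.length_pos_of_ne_nil h.1
  have h2 := List.length_pos_of_ne_nil h.2.1
  simp; omega

open Classical in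
/-- Bracketing along standard factorizations. -/
noncomputable def P (w : List α) : FreeLieAlgebra ℤ α :=
  if h : ∃ x : List α × List α, w = x.1 ++ x.2 ∧ Std x.1 x.2 then
    ⁅P h.choose.1, P h.choose.2⁆
  else match w with
    | [] => 0
    | a :: _ => FreeLieAlgebra.of ℤ a
termination_by w.length
decreasing_by
  · have := std_len h.choose_spec.2
    rw [← h.choose_spec.1] at this
    exact this.1
  · have := std_len h.choose_spec.2
    rw [← h.choose_spec.1] at this
    exact this.2

theorem P_append {u v : List α} (h : Std u v) : P (u ++ v) = ⁅P u, P v⁆ := by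
  have hex : ∃ x : List α × List α, u ++ v = x.1 ++ x.2 ∧ Std x.1 x.2 := ⟨(u, v), rfl, h⟩
  rw [P, dif_pos hex]
  obtain ⟨h1, h2⟩ := h.unique hex.choose_spec.2 hex.choose_spec.1
  rw [← h1, ← h2]

theorem P_singleton (a : α) : P [a] = FreeLieAlgebra.of ℤ a := by
  have hex : ¬ ∃ x : List α × List α, [a] = x.1 ++ x.2 ∧ Std x.1 x.2 := by
    rintro ⟨⟨u, v⟩, e, h⟩
    have h1 := List.length_pos_of_ne_nil h.1
    have h2 := List.length_pos_of_ne_nil h.2.1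
    have := congrArg List.length e
    simp at this h1 h2; omega
  rw [P, dif_neg hex]

/-- Lyndon induction. -/
theorem lyn_induction {p : List α → Prop} (h1 : ∀ a, p [a])
    (h2 : ∀ u v, Lyn u → Lyn v → Lyn (u ++ v) → Std u v → u < v → p u → p v → p (u ++ v)) :
    ∀ w, Lyn w → p w := by
  intro w
  induction hn : w.length using Nat.strong_induction_on generalizing w with
  | _ n ih =>
    intro hw
    by_cases hl : 2 ≤ w.length
    · obtain ⟨u, v, rfl, hs⟩ := exists_std w hl
      have := std_len hs
      have hu := hs.lyn_left hw
      exact h2 u v hu hs.lyn_right hw hs (hs.lt hw) (ih _ (by omega) u rfl hu)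
        (ih _ (by omega) v rfl hs.lyn_right)
    · have := List.length_pos_of_ne_nil hw.1
      obtain ⟨a, rfl⟩ := List.length_eq_one_iff.1 (show w.length = 1 by omega)
      exact h1 a

/-- Span of the brackets of Lyndon words of length `n` below `m`. -/
noncomputable def S (n : ℕ) (m : List α) : Submodule ℤ (FreeLieAlgebra ℤ α) :=
  span ℤ (P '' {w | Lyn w ∧ w.length = n ∧ w < m})

theorem S_mono {n : ℕ} {m m' : List α} (h : m ≤ m') : S n m ≤ S n m' := by
  apply span_mono
  apply Set.image_mono
  rintro w ⟨h1, h2, h3⟩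
  exact ⟨h1, h2, h3.trans_le h⟩

/-- The key claim for a pair. -/
def Good (u v : List α) : Prop := ⁅P u, P v⁆ ∈ S (u.length + v.length) (max u v)

theorem Good.symm {u v : List α} (h : Good u v) : Good v u := by
  unfold Good at *
  rw [← lie_skew, neg_mem_iff, max_comm, add_comm]
  exact h

theorem lie_mem_of_span_right {s : Set (FreeLieAlgebra ℤ α)} {T : Submodule ℤ (FreeLieAlgebra ℤ α)}
    {x : FreeLieAlgebra ℤ α} (h : ∀ y ∈ s, ⁅x, y⁆ ∈ T) {y} (hy : y ∈ span ℤ s) : ⁅x, y⁆ ∈ T := by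
  induction hy using span_induction with
  | mem y hy => exact h y hy
  | zero => simp
  | add y z _ _ h1 h2 => rw [lie_add]; exact add_mem h1 h2
  | smul c y _ h1 => rw [lie_smul]; exact smul_mem _ _ h1

theorem good_aux [Finite α] (N : ℕ)
    (ihN : ∀ u v : List α, Lyn u → Lyn v → u ≠ v → u.length + v.length < N → Good u v) :
    ∀ v u : List α, Lyn u → Lyn v → u < v → u.length + v.length = N → Good u v := by
  have hwf : Set.WellFoundedOn {v : List α | v.length ≤ N} (· < ·) :=
    (List.finite_length_le α N).wellFoundedOn
  suffices H : ∀ v ∈ {v : List α | v.length ≤ N}, ∀ u : List α, Lyn u → Lyn v → u < v →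
      u.length + v.length = N → Good u v by
    intro v u hu hv huv hN
    exact H v (by simp; omega) u hu hv huv hN
  intro v hv
  refine hwf.induction (P := fun v => ∀ u : List α, Lyn u → Lyn v → u < v →
      u.length + v.length = N → Good u v) hv ?_
  clear v hv
  intro v hvN ih
  intro u hu hv huv hN
  have ih' : ∀ a b : List α, Lyn a → Lyn b → a < v → b < v → a.length + b.length = N →
      ⁅P a, P b⁆ ∈ S N v := by
    intro a b ha hb hav hbv hab
    rcases lt_trichotomy a b with h | rfl | h
    · have := ih b (by simp; omega) hbv a ha hb h hab
      unfold Good at this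
      rw [hab, max_eq_right h.le] at this
      exact S_mono hbv.le this
    · simp
    · have := (ih a (by simp; omega) hav b hb ha h (by omega)).symm
      unfold Good at this
      rw [hab, max_eq_left h.le] at this
      exact S_mono hav.le this
  have base : Std u v → Good u v := by
    intro hs
    unfold Good
    rw [← P_append hs, max_eq_right huv.le]
    exact subset_span ⟨_, ⟨lyn_append hu hv huv, by simp, lyn_app_lt hu hv huv⟩, rfl⟩
  by_cases hl : 2 ≤ u.length
  · obtain ⟨u₁, u₂, rfl, hs⟩ := exists_std u hl
    by_cases hc : v ≤ u₂
    · exact base (std_append hs hv hc)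
    · rw [not_le] at hc
      have l1 := List.length_pos_of_ne_nil hs.1
      have l2 := List.length_pos_of_ne_nil hs.2.1
      have hu1 := hs.lyn_left hu
      have hu2 := hs.lyn_right
      have h12 := hs.lt hu
      have h1v := h12.trans hc
      rw [List.length_append] at hN
      have g1 := ihN u₁ v hu1 hv h1v.ne (by omega)
      have g2 := ihN u₂ v hu2 hv hc.ne (by omega)
      unfold Good at g1 g2 ⊢
      rw [max_eq_right h1v.le] at g1
      rw [max_eq_right hc.le] at g2
      rw [P_append hs, max_eq_right huv.le, List.length_append, hN, lie_lie]
      refine sub_mem ?_ ?_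
      · refine lie_mem_of_span_right ?_ g2
        rintro _ ⟨w, ⟨hw, hwl, hwv⟩, rfl⟩
        exact ih' _ _ hu1 hw h1v hwv (by omega)
      · refine lie_mem_of_span_right ?_ g1
        rintro _ ⟨w, ⟨hw, hwl, hwv⟩, rfl⟩
        exact ih' _ _ hu2 hw hc hwv (by omega)
  · have := List.length_pos_of_ne_nil hu.1
    obtain ⟨a, rfl⟩ := List.length_eq_one_iff.1 (show u.length = 1 by omega)
    exact base (std_singleton hv)

theorem good [Finite α] (u v : List α) (hu : Lyn u) (hv : Lyn v) (huv : u ≠ v) : Good u v := by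
  induction hn : u.length + v.length using Nat.strong_induction_on generalizing u v with
  | _ n ih =>
    have ihN : ∀ u v : List α, Lyn u → Lyn v → u ≠ v → u.length + v.length < n → Good u v :=
      fun u v hu hv h hl => ih _ hl u v hu hv h rfl
    rcases lt_or_gt_of_ne huv with h | h
    · exact good_aux n ihN v u hu hv h hn
    · exact (good_aux n ihN u v hv hu h (by omega)).symm

/-- Span of the Lyndon brackets of length n. -/
noncomputable def T (α : Type*) [LinearOrder α] (n : ℕ) : Submodule ℤ (FreeLieAlgebra ℤ α) :=
  span ℤ (Set.range (fun w : {w : List α // Lyn w ∧ w.length = n} => P w.1))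

theorem P_mem_T {w : List α} (hw : Lyn w) : P w ∈ T α w.length :=
  subset_span ⟨⟨w, hw, rfl⟩, rfl⟩

theorem lie_mem_T [Finite α] {u v : List α} (hu : Lyn u) (hv : Lyn v) :
    ⁅P u, P v⁆ ∈ T α (u.length + v.length) := by
  by_cases h : u = v
  · subst h; simp
  · refine span_mono ?_ (good u v hu hv h)
    rintro _ ⟨w, ⟨hw, hwl, -⟩, rfl⟩
    exact ⟨⟨w, hw, hwl⟩, rfl⟩

theorem piece_le (r n : ℕ) : freeLiePiece r n ≤ T (Fin r) n := by
  induction n using Nat.strong_induction_on with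
  | _ n ih =>
  match n with
  | 0 => simp [freeLiePiece]
  | 1 =>
    simp only [freeLiePiece, freeLieDegreeOne]
    rw [span_le]
    rintro _ ⟨a, rfl⟩
    rw [← P_singleton]
    have h := P_mem_T (lyn_singleton a)
    rwa [List.length_singleton] at h
  | n + 2 =>
    simp only [freeLiePiece, bracketSpan]
    rw [span_le]
    rintro _ ⟨a, ha, b, hb, rfl⟩
    have hb := ih (n + 1) (by omega) hb
    refine lie_mem_of_span_right ?_ hb
    rintro _ ⟨⟨w, hw, hwl⟩, rfl⟩
    rw [← lie_skew]
    refine neg_mem ?_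
    refine lie_mem_of_span_right ?_ ha
    rintro _ ⟨x, rfl⟩
    rw [← P_singleton]
    have := lie_mem_T hw (lyn_singleton x)
    rw [hwl] at this
    exact this

theorem lie_mem_piece (r : ℕ) {a b : ℕ} (ha : 1 ≤ a) (hb : 1 ≤ b) {x y : FreeLieAlgebra ℤ (Fin r)}
    (hx : x ∈ freeLiePiece r a) (hy : y ∈ freeLiePiece r b) : ⁅x, y⁆ ∈ freeLiePiece r (a + b) := by
  have one : ∀ {b : ℕ}, 1 ≤ b → ∀ {x y}, x ∈ freeLieDegreeOne r → y ∈ freeLiePiece r b →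
      ⁅x, y⁆ ∈ freeLiePiece r (b + 1) := by
    intro b hb x y hx hy
    obtain ⟨b, rfl⟩ := Nat.exists_eq_add_of_le' hb
    exact subset_span ⟨x, hx, y, hy, rfl⟩
  induction a, ha using Nat.le_induction generalizing b x y with
  | base => rw [add_comm]; exact one hb hx hy
  | succ a ha ih =>
    obtain ⟨a, rfl⟩ := Nat.exists_eq_add_of_le' ha
    rw [← lie_skew]
    refine neg_mem ?_
    refine lie_mem_of_span_right ?_ hx
    rintro _ ⟨p, hp, q, hq, rfl⟩
    rw [← lie_skew]
    refine neg_mem ?_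
    rw [lie_lie]
    refine sub_mem ?_ ?_
    · have := one (by omega) hp (ih hb hq hy)
      rwa [show a + 1 + b + 1 = a + 1 + 1 + b by omega] at this
    · have := ih (b := b + 1) (by omega) hq (one hb hp hy)
      rwa [show a + 1 + (b + 1) = a + 1 + 1 + b by omega] at this

theorem P_mem_piece (r : ℕ) (w : List (Fin r)) (hw : Lyn w) : P w ∈ freeLiePiece r w.length := by
  refine lyn_induction (p := fun w => P w ∈ freeLiePiece r w.length) ?_ ?_ w hw
  · intro a
    rw [P_singleton]
    exact subset_span ⟨a, rfl⟩
  · intro u v hu hv _ hs _ h1 h2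
    rw [P_append hs, List.length_append]
    exact lie_mem_piece r (List.length_pos_of_ne_nil hu.1) (List.length_pos_of_ne_nil hv.1) h1 h2

theorem piece_eq (r n : ℕ) : freeLiePiece r n = T (Fin r) n := by
  refine le_antisymm (piece_le r n) ?_
  unfold T
  rw [span_le]
  rintro _ ⟨⟨w, hw, rfl⟩, rfl⟩
  exact P_mem_piece r w hw

end lie

section indep
open Submodule

attribute [local instance 100] LieRing.ofAssociativeRing

/-- the free associative ring, as a monoid algebra. -/
abbrev A (α : Type*) := MonoidAlgebra ℤ (FreeMonoid α)

/-- monomial -/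
noncomputable def mon (w : List α) : A α := MonoidAlgebra.single (FreeMonoid.ofList w) 1

/-- canonical map -/
noncomputable def φ : FreeLieAlgebra ℤ α →+ A α :=
  AddMonoidHom.mk' (fun x => FreeLieAlgebra.lift ℤ (L := A α) (fun a => mon [a]) x)
    (fun x y => map_add (FreeLieAlgebra.lift ℤ (L := A α) (fun a => mon [a])).toLinearMap x y)

theorem φ_of (a : α) : φ (FreeLieAlgebra.of ℤ a) = mon [a] :=
  FreeLieAlgebra.lift_of_apply (R := ℤ) (L := A α) (fun a => mon [a]) a

theorem φ_lie (x y : FreeLieAlgebra ℤ α) : φ ⁅x, y⁆ = φ x * φ y - φ y * φ x :=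
  LieHom.map_lie (FreeLieAlgebra.lift ℤ (L := A α) (fun a => mon [a])) x y

theorem mon_mul (u v : List α) : mon u * mon v = mon (u ++ v) := by
  simp [mon, MonoidAlgebra.single_mul_single, FreeMonoid.ofList_append]

/-- strictly larger words -/
noncomputable def M (w : List α) : Submodule ℤ (A α) :=
  span ℤ (mon '' {z | z.length = w.length ∧ w < z})

/-- larger words -/
noncomputable def N (w : List α) : Submodule ℤ (A α) :=
  span ℤ (mon '' {z | z.length = w.length ∧ w ≤ z})

theorem M_le_N (w : List α) : M w ≤ N w :=
  span_mono (Set.image_mono fun _ h => ⟨h.1, h.2.le⟩)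

theorem mon_mem_N (w : List α) : mon w ∈ N w := subset_span ⟨w, ⟨rfl, le_rfl⟩, rfl⟩

theorem span_mul_mem {s t : Set (List α)} {Q : Submodule ℤ (A α)}
    (h : ∀ u ∈ s, ∀ v ∈ t, mon (u ++ v) ∈ Q) {x y : A α} (hx : x ∈ span ℤ (mon '' s))
    (hy : y ∈ span ℤ (mon '' t)) : x * y ∈ Q := by
  have := Submodule.mul_mem_mul hx hy
  rw [Submodule.span_mul_span] at this
  refine (span_le.2 ?_) this
  rintro _ ⟨_, ⟨u, hu, rfl⟩, _, ⟨v, hv, rfl⟩, rfl⟩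
  dsimp only
  rw [mon_mul]
  exact h u hu v hv

theorem app_le {u v z y : List α} (h1 : z.length = u.length) (hz : u ≤ z) (hy : v ≤ y) :
    u ++ v ≤ z ++ y := by
  rcases hz.lt_or_eq with hz | rfl
  · exact (app_lt_app_len hz h1.le v y).le
  · rcases hy.lt_or_eq with hy | rfl
    · exact ((app_lt_left _).2 hy).le
    · exact le_rfl

theorem phi_P (w : List α) (hw : Lyn w) : φ (P w) - mon w ∈ M w := by
  refine lyn_induction (p := fun w => φ (P w) - mon w ∈ M w) ?_ ?_ w hw
  · intro a
    rw [P_singleton]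
    rw [φ_of, sub_self]
    exact zero_mem _
  · intro u v hu hv huv hs hlt h1 h2
    have n1 : φ (P u) ∈ N u := by
      have := add_mem (M_le_N u h1) (mon_mem_N u)
      simpa using this
    have n2 : φ (P v) ∈ N v := by
      have := add_mem (M_le_N v h2) (mon_mem_N v)
      simpa using this
    have e : φ (P (u ++ v)) - mon (u ++ v) =
        (φ (P u) - mon u) * φ (P v) + mon u * (φ (P v) - mon v) - φ (P v) * φ (P u) := by
      rw [P_append hs, φ_lie, ← mon_mul]
      noncomm_ring
    rw [e]
    refine sub_mem (add_mem ?_ ?_) ?_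
    · refine span_mul_mem ?_ h1 n2
      rintro z ⟨hz1, hz2⟩ y ⟨hy1, hy2⟩
      exact subset_span ⟨_, ⟨by simp [hz1, hy1], app_lt_app_len hz2 hz1.le _ _⟩, rfl⟩
    · refine span_mul_mem (s := {u}) ?_ (subset_span ⟨u, rfl, rfl⟩) h2
      rintro z rfl y ⟨hy1, hy2⟩
      exact subset_span ⟨_, ⟨by simp [hy1], (app_lt_left _).2 hy2⟩, rfl⟩
    · refine span_mul_mem ?_ n2 n1
      rintro z ⟨hz1, hz2⟩ y ⟨hy1, hy2⟩
      refine subset_span ⟨_, ⟨by simp [hz1, hy1, add_comm], ?_⟩, rfl⟩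
      exact ((lyn_app_lt hu hv hlt).trans_le (le_app v u)).trans_le (app_le hz1 hz2 hy2)

/-- coefficient functional -/
noncomputable def coef (w : List α) : A α →ₗ[ℤ] ℤ :=
  (Finsupp.lapply (FreeMonoid.ofList w)) ∘ₗ (MonoidAlgebra.coeffLinearEquiv ℤ).toLinearMap

theorem coef_mon (w z : List α) : coef w (mon z) = if z = w then 1 else 0 := by
  classical
  change (Finsupp.single (FreeMonoid.ofList z) (1 : ℤ)) (FreeMonoid.ofList w) = _
  rw [Finsupp.single_apply]
  simp only [EmbeddingLike.apply_eq_iff_eq]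

theorem coef_M {w z : List α} (h : z ≤ w) {x : A α} (hx : x ∈ M w) : coef z x = 0 := by
  have : M w ≤ LinearMap.ker (coef z) := by
    unfold M
    rw [span_le]
    rintro _ ⟨y, ⟨_, hy⟩, rfl⟩
    simp only [SetLike.mem_coe, LinearMap.mem_ker]
    rw [coef_mon, if_neg (h.trans_lt hy).ne']
  exact this hx

theorem coef_P {w z : List α} (hw : Lyn w) (h : z ≤ w) :
    coef z (φ (P w)) = if w = z then 1 else 0 := by
  have := coef_M h (phi_P w hw)
  rw [map_sub, coef_mon, sub_eq_zero] at this
  exact this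

theorem linInd (n : ℕ) :
    LinearIndependent ℤ (fun w : {w : List α // Lyn w ∧ w.length = n} => P w.1) := by
  rw [linearIndependent_iff']
  intro s g hg
  by_contra hc
  push Not at hc
  obtain ⟨i, hi, hgi⟩ := hc
  obtain ⟨m, hm, hmin⟩ := Finset.exists_min_image (s.filter (fun i => g i ≠ 0)) (fun i => i.1)
    ⟨i, by simp [hi, hgi]⟩
  rw [Finset.mem_filter] at hm
  apply hm.2
  have h1 := congrArg (coef m.1 ∘ₗ (φ : FreeLieAlgebra ℤ α →+ A α).toIntLinearMap) hg
  simp only [map_sum, map_zero, LinearMap.map_smul, LinearMap.comp_apply, AddMonoidHom.coe_toIntLinearMap] at h1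
  rw [Finset.sum_eq_single m] at h1
  · simpa [coef_P m.2.1 le_rfl] using h1
  · intro b hb hbm
    by_cases h0 : g b = 0
    · simp [h0]
    · rw [coef_P b.2.1 (hmin b (by simp [hb, h0])), if_neg (fun h => hbm (Subtype.ext h))]
      simp
  · intro h; exact absurd hm.1 h

end indep

end WittAux

/-- **Witt's formula.** The degree-`n` graded piece `Lie_r^n` of the free Lie ring on `r`
generators is a free abelian group whose rank satisfies
`n · rank(Lie_r^n) = Σ_{d ∣ n} μ(d) · r^{n/d}`, where `μ` is the Möbius function. -/
theorem witt_formula (r n : ℕ) (hn : 1 ≤ n) :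
    Module.Free ℤ (freeLiePiece r n) ∧
      (n : ℤ) * (Module.finrank ℤ (freeLiePiece r n)) =
        ∑ d ∈ n.divisors, (ArithmeticFunction.moebius d : ℤ) * (r : ℤ) ^ (n / d) := by
  have hli := WittAux.linInd (α := Fin r) n
  have := WittAux.finite_lyn (α := Fin r) n
  have := Fintype.ofFinite {w : List (Fin r) // WittAux.Lyn w ∧ w.length = n}
  rw [WittAux.piece_eq]
  refine ⟨Module.Free.of_basis (Module.Basis.span hli), ?_⟩
  have hr := Module.finrank_eq_card_basis (Module.Basis.span hli)
  unfold WittAux.T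
  rw [hr, ← Nat.card_eq_fintype_card, WittAux.lyn_formula hn, Fintype.card_fin]
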